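/- arXiv:1906.02233 — 3 statements merged into one kernel-verified Lean document; each statement's English description precedes it below -/
import Mathlib

section
/- Let A, A₁, A₂ : ℂ × ℂ → ℂ be analytic on all of ℂ² with A(t,z) = A₁(t,z)²·A₂(t,z) for all (t,z), suppose A is not identically zero, and suppose A₁(t₀, z₀) = 0 for some point (t₀, z₀) ∈ ℂ². Then A cannot satisfy the heat equation; that is, there exists (t,z) ∈ ℂ² with ∂_t A(t,z) ≠ ∂_z² A(t,z). -/
open Filter MeasureTheory

/-!
At a zero `p` of `A₁`, expand along the parabolas `e ↦ p + (e², w e)`. The coefficient of `eⁿ` in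
the expansion of an analytic function is a polynomial in `w` of degree at most `n`, and the
lowest nonzero coefficient (the initial form of the germ) is multiplicative. The heat equation
forces the initial form of `A`, occurring in degree `n`, to satisfy the Hermite equation
`2 g'' + w g' = n g`, hence to have degree exactly `n` and to be squarefree. Comparing degrees in
`A = A₁² A₂`, the initial form of `A₁` also has maximal degree, which is positive as `A₁ p = 0`,
while its square divides a squarefree polynomial.
-/

open scoped Polynomial PowerSeries Topology

section HermiteEquation

open Polynomial

/-- The Hermite equation `2 g'' + X g' = a g`. Over `ℝ` or `ℂ` its solutions are the profiles `g`
for which `t ^ (a / 2) * g (z / √t)` solves the heat equation. -/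
def IsHermiteSolution {R : Type*} [CommRing R] (a : R) (g : R[X]) : Prop :=
  2 * derivative (derivative g) + X * derivative g = C a * g

namespace IsHermiteSolution

theorem smul {R : Type*} [CommRing R] {a : R} {g : R[X]} (h : IsHermiteSolution a g) (c : R) :
    IsHermiteSolution a (c • g) := by
  unfold IsHermiteSolution at h ⊢
  simp only [derivative_smul, mul_smul_comm, ← smul_add, h]

protected theorem derivative {R : Type*} [CommRing R] {a : R} {g : R[X]}
    (h : IsHermiteSolution a g) : IsHermiteSolution (a - 1) (derivative g) := by
  have hderiv := congrArg derivative h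
  simp only [derivative_add, derivative_mul, derivative_X, derivative_C, derivative_ofNat,
    zero_mul, zero_add] at hderiv
  unfold IsHermiteSolution
  rw [C_sub, C_1]
  linear_combination hderiv

theorem eq_natDegree {R : Type*} [CommRing R] [IsDomain R] {a : R} {g : R[X]}
    (h : IsHermiteSolution a g) (hg : g ≠ 0) : a = g.natDegree := by
  have hX (n : ℕ) : (X * derivative g).coeff n = n * g.coeff n := by
    cases n with
    | zero => simp
    | succ n => rw [coeff_X_mul, coeff_derivative, mul_comm, Nat.cast_succ]
  have htop : g.coeff (g.natDegree + 1 + 1) = 0 := coeff_eq_zero_of_natDegree_lt (by omega)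
  have hlead := congrArg (coeff · g.natDegree) h
  simp only [coeff_add, coeff_ofNat_mul, coeff_derivative, htop, hX, zero_mul, mul_zero, zero_add,
    coeff_C_mul] at hlead
  exact (mul_right_cancel₀ (leadingCoeff_ne_zero.2 hg) hlead).symm

/-- The equation makes `d` divide `g''`, so the hypotheses pass from `g` to `g'`; the degree drops
until `g` is a nonzero constant. -/
theorem isUnit_of_dvd_of_dvd_derivative {k : Type*} [Field k] [CharZero k] {a : k} {g d : k[X]}
    (h : IsHermiteSolution a g) (hg : g ≠ 0) (hd : d ∣ g) (hd' : d ∣ derivative g) :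
    IsUnit d := by
  by_cases hdeg : g.natDegree = 0
  · rw [natDegree_eq_zero] at hdeg
    obtain ⟨c, rfl⟩ := hdeg
    exact isUnit_of_dvd_unit hd (isUnit_C.2 (isUnit_iff_ne_zero.2 (C_ne_zero.1 hg)))
  · have hd'' : d ∣ derivative (derivative g) := by
      have hdvd := dvd_sub (hd.mul_left (C a)) (hd'.mul_left X)
      rw [← h, add_sub_cancel_right, ← map_ofNat C 2] at hdvd
      exact (IsUnit.dvd_mul_left (isUnit_C.2 (isUnit_iff_ne_zero.2 two_ne_zero))).1 hdvd
    exact h.derivative.isUnit_of_dvd_of_dvd_derivative (mt derivative_eq_zero.1 hdeg) hd' hd''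
termination_by g.natDegree
decreasing_by exact natDegree_derivative_lt hdeg

theorem squarefree {k : Type*} [Field k] [CharZero k] {a : k} {g : k[X]}
    (h : IsHermiteSolution a g) (hg : g ≠ 0) : Squarefree g := by
  rintro d ⟨c, rfl⟩
  refine h.isUnit_of_dvd_of_dvd_derivative hg ⟨d * c, mul_assoc d d c⟩ ?_
  rw [mul_assoc, derivative_mul, derivative_mul]
  exact dvd_add ((dvd_mul_right d c).mul_left _) (dvd_mul_right d _)

end IsHermiteSolution

end HermiteEquation

section DirectionalDerivatives

variable {𝕜 E F : Type*} [NontriviallyNormedField 𝕜] [NormedAddCommGroup E] [NormedSpace 𝕜 E]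
  [NormedAddCommGroup F] [NormedSpace 𝕜 F] [CompleteSpace F] {f : E → F} {x : E}

theorem analyticAt_fderiv_apply (hf : AnalyticAt 𝕜 f x) (v : E) :
    AnalyticAt 𝕜 (fun y => fderiv 𝕜 f y v) x :=
  ((ContinuousLinearMap.apply 𝕜 F v).analyticAt _).comp hf.fderiv

theorem fderiv_fderiv_apply_comm (hf : AnalyticAt 𝕜 f x) (v w : E) :
    fderiv 𝕜 (fun y => fderiv 𝕜 f y v) x w = fderiv 𝕜 (fun y => fderiv 𝕜 f y w) x v := by
  have hsecond (v w : E) :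
      fderiv 𝕜 (fun y => fderiv 𝕜 f y v) x w = fderiv 𝕜 (fderiv 𝕜 f) x w v := by
    rw [fderiv_clm_apply hf.fderiv.differentiableAt (differentiableAt_const v)]
    simp
  rw [hsecond, hsecond]
  exact hf.contDiffAt.isSymmSndFDerivAt_of_omega w v

end DirectionalDerivatives

section PartialDerivatives

variable {𝕜 : Type*} [NontriviallyNormedField 𝕜] {f g : 𝕜 × 𝕜 → 𝕜} {p : 𝕜 × 𝕜}

/-- The partial derivative in the first (time) variable. -/
noncomputable def timeDeriv (f : 𝕜 × 𝕜 → 𝕜) (p : 𝕜 × 𝕜) : 𝕜 := fderiv 𝕜 f p (1, 0)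

/-- The partial derivative in the second (space) variable. -/
noncomputable def spaceDeriv (f : 𝕜 × 𝕜 → 𝕜) (p : 𝕜 × 𝕜) : 𝕜 := fderiv 𝕜 f p (0, 1)

theorem timeDeriv_congr (h : f =ᶠ[𝓝 p] g) : timeDeriv f =ᶠ[𝓝 p] timeDeriv g :=
  h.fderiv.fun_comp (· (1, 0))

theorem spaceDeriv_congr (h : f =ᶠ[𝓝 p] g) : spaceDeriv f =ᶠ[𝓝 p] spaceDeriv g :=
  h.fderiv.fun_comp (· (0, 1))

theorem hasDerivAt_comp_of_partials {γ : 𝕜 → 𝕜 × 𝕜} {s : 𝕜} {v : 𝕜 × 𝕜}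
    (hf : DifferentiableAt 𝕜 f (γ s)) (hγ : HasDerivAt γ v s) :
    HasDerivAt (f ∘ γ) (v.1 * timeDeriv f (γ s) + v.2 * spaceDeriv f (γ s)) s := by
  have hv : v = v.1 • (1, 0) + v.2 • (0, 1) := by simp
  have hcomp := hf.hasFDerivAt.comp_hasDerivAt s hγ
  rw [hv, map_add, map_smul, map_smul] at hcomp
  exact hcomp

theorem deriv_fst_eq_timeDeriv (hf : DifferentiableAt 𝕜 f p) :
    deriv (fun s => f (s, p.2)) p.1 = timeDeriv f p := by
  have hline : HasDerivAt (fun s => (s, p.2)) ((1 : 𝕜), (0 : 𝕜)) p.1 :=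
    (hasDerivAt_id _).prodMk (hasDerivAt_const _ _)
  simpa [Function.comp_def] using (hasDerivAt_comp_of_partials hf hline).deriv

theorem deriv_snd_eq_spaceDeriv (hf : DifferentiableAt 𝕜 f p) :
    deriv (fun w => f (p.1, w)) p.2 = spaceDeriv f p := by
  have hline : HasDerivAt (fun w => (p.1, w)) ((0 : 𝕜), (1 : 𝕜)) p.2 :=
    (hasDerivAt_const _ _).prodMk (hasDerivAt_id _)
  simpa [Function.comp_def] using (hasDerivAt_comp_of_partials hf hline).deriv

variable [CompleteSpace 𝕜]

theorem analyticAt_timeDeriv (hf : AnalyticAt 𝕜 f p) : AnalyticAt 𝕜 (timeDeriv f) p :=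
  analyticAt_fderiv_apply hf _

theorem analyticAt_spaceDeriv (hf : AnalyticAt 𝕜 f p) : AnalyticAt 𝕜 (spaceDeriv f) p :=
  analyticAt_fderiv_apply hf _

theorem spaceDeriv_timeDeriv_eventuallyEq (hf : AnalyticAt 𝕜 f p) :
    spaceDeriv (timeDeriv f) =ᶠ[𝓝 p] timeDeriv (spaceDeriv f) :=
  hf.eventually_analyticAt.mono fun _ hq => fderiv_fderiv_apply_comm hq _ _

theorem iteratedDeriv_two_snd_eq_spaceDeriv (hf : AnalyticAt 𝕜 f p) :
    iteratedDeriv 2 (fun w => f (p.1, w)) p.2 = spaceDeriv (spaceDeriv f) p := by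
  have hline : Tendsto (fun w => (p.1, w)) (𝓝 p.2) (𝓝 p) :=
    (Continuous.prodMk_right p.1).tendsto p.2
  have hfirst : deriv (fun w => f (p.1, w)) =ᶠ[𝓝 p.2] fun w => spaceDeriv f (p.1, w) :=
    (hline.eventually hf.eventually_analyticAt).mono fun _ hw =>
      deriv_snd_eq_spaceDeriv hw.differentiableAt
  rw [iteratedDeriv_succ', iteratedDeriv_one, hfirst.deriv_eq,
    deriv_snd_eq_spaceDeriv (analyticAt_spaceDeriv hf).differentiableAt]

theorem timeDeriv_eventuallyEq_of_caloric (hf : AnalyticAt 𝕜 f p)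
    (hcaloric : ∀ᶠ q in 𝓝 p,
      deriv (fun s => f (s, q.2)) q.1 = iteratedDeriv 2 (fun w => f (q.1, w)) q.2) :
    timeDeriv f =ᶠ[𝓝 p] spaceDeriv (spaceDeriv f) := by
  filter_upwards [hcaloric, hf.eventually_analyticAt] with q hq hfq
  rw [← deriv_fst_eq_timeDeriv hfq.differentiableAt, hq, iteratedDeriv_two_snd_eq_spaceDeriv hfq]

end PartialDerivatives

section Parabola

variable {𝕜 : Type*} [NontriviallyNormedField 𝕜] {f : 𝕜 × 𝕜 → 𝕜} {p : 𝕜 × 𝕜}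

/-- The parabola `e ↦ p + (e², w e)`, invariant under the parabolic scaling of the heat equation
around `p`. -/
def parabola (p : 𝕜 × 𝕜) (w e : 𝕜) : 𝕜 × 𝕜 := (p.1 + e ^ 2, p.2 + w * e)

@[simp]
theorem parabola_zero (p : 𝕜 × 𝕜) (w : 𝕜) : parabola p w 0 = p := by
  simp [parabola]

theorem analyticAt_parabola (p : 𝕜 × 𝕜) (w e : 𝕜) : AnalyticAt 𝕜 (parabola p w) e := by
  unfold parabola
  fun_prop

theorem hasDerivAt_parabola (p : 𝕜 × 𝕜) (w e : 𝕜) :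
    HasDerivAt (parabola p w) (2 * e, w) e := by
  refine HasDerivAt.prodMk ?_ ?_
  · simpa using (hasDerivAt_pow 2 e).const_add p.1
  · simpa using ((hasDerivAt_id e).const_mul w).const_add p.2

theorem analyticAt_comp_parabola (hf : AnalyticAt 𝕜 f p) (w : 𝕜) :
    AnalyticAt 𝕜 (f ∘ parabola p w) 0 :=
  AnalyticAt.comp (by rwa [parabola_zero]) (analyticAt_parabola p w 0)

theorem iteratedDeriv_id_mul {h : 𝕜 → 𝕜} {n : ℕ} (hh : ContDiffAt 𝕜 n h 0) :
    iteratedDeriv n (fun e => e * h e) 0 = n * iteratedDeriv (n - 1) h 0 := by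
  rw [iteratedDeriv_fun_mul contDiffAt_fun_id hh]
  simp only [iteratedDeriv_fun_id_zero]
  cases n with
  | zero => simp
  | succ n =>
    rw [Finset.sum_eq_single_of_mem 1 (by simp) fun i _ hi => by simp [hi]]
    simp

theorem iteratedDeriv_succ_comp_parabola [CompleteSpace 𝕜] (hf : AnalyticAt 𝕜 f p) (w : 𝕜)
    (n : ℕ) :
    iteratedDeriv (n + 1) (f ∘ parabola p w) 0
      = 2 * (n * iteratedDeriv (n - 1) (timeDeriv f ∘ parabola p w) 0)
        + w * iteratedDeriv n (spaceDeriv f ∘ parabola p w) 0 := by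
  have htime := analyticAt_comp_parabola (analyticAt_timeDeriv hf) w
  have hspace := analyticAt_comp_parabola (analyticAt_spaceDeriv hf) w
  have hid : AnalyticAt 𝕜 (fun e => e * (timeDeriv f ∘ parabola p w) e) 0 :=
    analyticAt_id.mul htime
  have hchain : deriv (f ∘ parabola p w) =ᶠ[𝓝 0] fun e =>
      2 * (e * (timeDeriv f ∘ parabola p w) e) + w * (spaceDeriv f ∘ parabola p w) e := by
    have hlim := (analyticAt_parabola p w 0).continuousAt.tendsto
    rw [parabola_zero] at hlim
    filter_upwards [hlim.eventually hf.eventually_analyticAt] with e he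
    rw [(hasDerivAt_comp_of_partials he.differentiableAt (hasDerivAt_parabola p w e)).deriv,
      mul_assoc, Function.comp_apply, Function.comp_apply]
  rw [iteratedDeriv_succ', hchain.iteratedDeriv_eq,
    iteratedDeriv_fun_add (contDiffAt_const.mul hid.contDiffAt)
      (contDiffAt_const.mul hspace.contDiffAt),
    iteratedDeriv_const_mul _ hid.contDiffAt, iteratedDeriv_const_mul _ hspace.contDiffAt,
    iteratedDeriv_id_mul htime.contDiffAt]

end Parabola

section ParabolicJet

open Polynomial

variable {𝕜 : Type*} [NontriviallyNormedField 𝕜] {f g : 𝕜 × 𝕜 → 𝕜} {p : 𝕜 × 𝕜}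

/-- The `n`-th derivative at `e = 0` of `f` along the parabola `e ↦ p + (e², w e)`, as a
polynomial in `w`. The recursion differentiates once along the parabola; the term with the
truncated index `n - 1` vanishes for `n = 0`. -/
noncomputable def parabolicJet (p : 𝕜 × 𝕜) : ℕ → (𝕜 × 𝕜 → 𝕜) → 𝕜[X]
  | 0, f => C (f p)
  | n + 1, f => C (2 * n : 𝕜) * parabolicJet p (n - 1) (timeDeriv f)
      + X * parabolicJet p n (spaceDeriv f)

theorem parabolicJet_congr (h : f =ᶠ[𝓝 p] g) (n : ℕ) :
    parabolicJet p n f = parabolicJet p n g := by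
  induction n using Nat.strong_induction_on generalizing f g with
  | _ n ih =>
    cases n with
    | zero => rw [parabolicJet, parabolicJet, h.eq_of_nhds]
    | succ n =>
      rw [parabolicJet, parabolicJet, ih (n - 1) (by omega) (timeDeriv_congr h),
        ih n (by omega) (spaceDeriv_congr h)]

theorem natDegree_parabolicJet_le (p : 𝕜 × 𝕜) (n : ℕ) (f : 𝕜 × 𝕜 → 𝕜) :
    (parabolicJet p n f).natDegree ≤ n := by
  fun_induction parabolicJet p n f with
  | case1 f => simp
  | case2 n f ihtime ihspace =>
    refine natDegree_add_le_of_degree_le ?_ ?_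
    · exact (natDegree_C_mul_le _ _).trans (by omega)
    · exact natDegree_mul_le.trans (by rw [natDegree_X]; omega)

variable [CompleteSpace 𝕜]

theorem eval_parabolicJet (hf : AnalyticAt 𝕜 f p) (n : ℕ) (w : 𝕜) :
    (parabolicJet p n f).eval w = iteratedDeriv n (f ∘ parabola p w) 0 := by
  fun_induction parabolicJet p n f with
  | case1 f => simp
  | case2 n f ihtime ihspace =>
    rw [iteratedDeriv_succ_comp_parabola hf, ← ihtime (analyticAt_timeDeriv hf),
      ← ihspace (analyticAt_spaceDeriv hf)]
    simp [mul_assoc]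

theorem derivative_parabolicJet (hf : AnalyticAt 𝕜 f p) (n : ℕ) :
    derivative (parabolicJet p n f) = C (n : 𝕜) * parabolicJet p (n - 1) (spaceDeriv f) := by
  induction n using Nat.strong_induction_on generalizing f with
  | _ n ih =>
    rcases n with _ | _ | n
    · simp [parabolicJet]
    · simp [parabolicJet]
    · have htime := ih n (by omega) (analyticAt_timeDeriv hf)
      have hspace := ih (n + 1) (by omega) (analyticAt_spaceDeriv hf)
      rw [parabolicJet_congr (spaceDeriv_timeDeriv_eventuallyEq hf)] at htime
      rw [parabolicJet]
      simp only [derivative_add, derivative_mul, derivative_C, derivative_X, zero_mul, zero_add,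
        Nat.add_sub_cancel] at htime hspace ⊢
      rw [htime, hspace, parabolicJet]
      simp only [map_mul, map_natCast, map_ofNat, Nat.cast_add, Nat.cast_one, map_add, map_one]
      ring

theorem isHermiteSolution_parabolicJet (hf : AnalyticAt 𝕜 f p)
    (hheat : timeDeriv f =ᶠ[𝓝 p] spaceDeriv (spaceDeriv f)) (n : ℕ) :
    IsHermiteSolution (n : 𝕜) (parabolicJet p n f) := by
  unfold IsHermiteSolution
  cases n with
  | zero => simp [parabolicJet]
  | succ n =>
    rw [derivative_parabolicJet hf, derivative_C_mul, Nat.add_sub_cancel,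
      derivative_parabolicJet (analyticAt_spaceDeriv hf), parabolicJet, parabolicJet_congr hheat]
    simp only [map_mul, map_natCast, map_ofNat]
    ring

end ParabolicJet

section ParabolicSeries

open Polynomial

variable {𝕜 : Type*} [NontriviallyNormedField 𝕜] {f g : 𝕜 × 𝕜 → 𝕜} {p : 𝕜 × 𝕜}

/-- The Taylor series in `e` of `f` along the parabolas `e ↦ p + (e², w e)`, with coefficients
polynomial in `w`. -/
noncomputable def parabolicSeries (p : 𝕜 × 𝕜) (f : 𝕜 × 𝕜 → 𝕜) : 𝕜[X]⟦X⟧ :=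
  PowerSeries.mk fun n => (n.factorial : 𝕜)⁻¹ • parabolicJet p n f

/-- The parabolic vanishing order of `f` at `p`, in which `t` has weight two and `z` weight one.
It is `0` when the whole series vanishes. -/
noncomputable def parabolicOrder (p : 𝕜 × 𝕜) (f : 𝕜 × 𝕜 → 𝕜) : ℕ :=
  (parabolicSeries p f).order.toNat

/-- The parabolic initial form of `f` at `p`: the lowest nonzero coefficient of
`parabolicSeries p f`, and `0` when the whole series vanishes. -/
noncomputable def parabolicInitialForm (p : 𝕜 × 𝕜) (f : 𝕜 × 𝕜 → 𝕜) : 𝕜[X] :=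
  PowerSeries.constantCoeff (parabolicSeries p f).divXPowOrder

theorem parabolicInitialForm_ne_zero :
    parabolicInitialForm p f ≠ 0 ↔ parabolicSeries p f ≠ 0 :=
  PowerSeries.constantCoeff_divXPowOrder_eq_zero_iff.not

theorem parabolicInitialForm_eq_smul_parabolicJet (p : 𝕜 × 𝕜) (f : 𝕜 × 𝕜 → 𝕜) :
    parabolicInitialForm p f
      = ((parabolicOrder p f).factorial : 𝕜)⁻¹ • parabolicJet p (parabolicOrder p f) f := by
  rw [parabolicInitialForm, PowerSeries.constantCoeff_divXPowOrder]
  exact PowerSeries.coeff_mk _ _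

theorem natDegree_parabolicInitialForm_le (p : 𝕜 × 𝕜) (f : 𝕜 × 𝕜 → 𝕜) :
    (parabolicInitialForm p f).natDegree ≤ parabolicOrder p f := by
  rw [parabolicInitialForm_eq_smul_parabolicJet]
  exact (natDegree_smul_le _ _).trans (natDegree_parabolicJet_le p _ f)

theorem parabolicOrder_pos (hzero : f p = 0) (hf : parabolicSeries p f ≠ 0) :
    0 < parabolicOrder p f := by
  have hconst : PowerSeries.constantCoeff (parabolicSeries p f) = 0 := by
    simp [parabolicSeries, parabolicJet, hzero]
  have horder := PowerSeries.order_ne_zero_iff_constCoeff_eq_zero.2 hconst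
  exact ENat.toNat_pos horder (PowerSeries.order_eq_top.not.2 hf)

variable [CompleteSpace 𝕜]

theorem isHermiteSolution_parabolicInitialForm (hf : AnalyticAt 𝕜 f p)
    (hheat : timeDeriv f =ᶠ[𝓝 p] spaceDeriv (spaceDeriv f)) :
    IsHermiteSolution (parabolicOrder p f : 𝕜) (parabolicInitialForm p f) := by
  rw [parabolicInitialForm_eq_smul_parabolicJet]
  exact (isHermiteSolution_parabolicJet hf hheat _).smul _

theorem parabolicSeries_mul [CharZero 𝕜] (hf : AnalyticAt 𝕜 f p) (hg : AnalyticAt 𝕜 g p) :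
    parabolicSeries p (f * g) = parabolicSeries p f * parabolicSeries p g := by
  ext1 n
  refine Polynomial.funext fun w => ?_
  have hleibniz := iteratedDeriv_fun_mul (n := n) (analyticAt_comp_parabola hf w).contDiffAt
    (analyticAt_comp_parabola hg w).contDiffAt
  rw [PowerSeries.coeff_mul, Finset.Nat.sum_antidiagonal_eq_sum_range_succ_mk]
  simp only [parabolicSeries, PowerSeries.coeff_mk, eval_finsetSum, eval_mul, eval_smul,
    smul_eq_mul, eval_parabolicJet hf, eval_parabolicJet hg, eval_parabolicJet (hf.mul hg)]
  refine (congrArg _ hleibniz).trans ?_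
  rw [Finset.mul_sum]
  refine Finset.sum_congr rfl fun i hi => ?_
  have hn : (n.factorial : 𝕜) ≠ 0 := Nat.cast_ne_zero.2 n.factorial_ne_zero
  rw [Nat.cast_choose 𝕜 (Finset.mem_range_succ_iff.1 hi)]
  field_simp

theorem parabolicInitialForm_mul [CharZero 𝕜] (hf : AnalyticAt 𝕜 f p) (hg : AnalyticAt 𝕜 g p) :
    parabolicInitialForm p (f * g) = parabolicInitialForm p f * parabolicInitialForm p g := by
  rw [parabolicInitialForm, parabolicSeries_mul hf hg, PowerSeries.divXPowOrder_mul, map_mul]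
  rfl

theorem parabolicOrder_mul [CharZero 𝕜] (hf : AnalyticAt 𝕜 f p) (hg : AnalyticAt 𝕜 g p)
    (hf₀ : parabolicSeries p f ≠ 0) (hg₀ : parabolicSeries p g ≠ 0) :
    parabolicOrder p (f * g) = parabolicOrder p f + parabolicOrder p g := by
  rw [parabolicOrder, parabolicSeries_mul hf hg, PowerSeries.order_mul]
  exact ENat.toNat_add (PowerSeries.order_eq_top.not.2 hf₀) (PowerSeries.order_eq_top.not.2 hg₀)

theorem apply_ne_zero_of_mul_self_mul_caloric [CharZero 𝕜] (hf : AnalyticAt 𝕜 f p)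
    (hg : AnalyticAt 𝕜 g p) (hne : parabolicSeries p (f * f * g) ≠ 0)
    (hheat : timeDeriv (f * f * g) =ᶠ[𝓝 p] spaceDeriv (spaceDeriv (f * f * g))) : f p ≠ 0 := by
  intro hzero
  have hff := hf.mul hf
  obtain ⟨hff₀, hg₀⟩ := mul_ne_zero_iff.1 (parabolicSeries_mul hff hg ▸ hne)
  have hf₀ := (mul_ne_zero_iff.1 (parabolicSeries_mul hf hf ▸ hff₀)).1
  have hform₀ := parabolicInitialForm_ne_zero.2 hne
  have hhermite := isHermiteSolution_parabolicInitialForm (hff.mul hg) hheat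
  have hsquarefree := hhermite.squarefree hform₀
  have hdegree := Nat.cast_injective (hhermite.eq_natDegree hform₀)
  rw [parabolicInitialForm_mul hff hg, parabolicInitialForm_mul hf hf] at hsquarefree hdegree
  rw [parabolicOrder_mul hff hg hff₀ hg₀, parabolicOrder_mul hf hf hf₀ hf₀] at hdegree
  have hconst : (parabolicInitialForm p f).natDegree = 0 :=
    natDegree_eq_zero_of_isUnit (hsquarefree _ (dvd_mul_right _ _))
  have hdegree_le : (parabolicInitialForm p f * parabolicInitialForm p f
      * parabolicInitialForm p g).natDegree ≤ parabolicOrder p g := by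
    refine natDegree_mul_le.trans ((Nat.add_le_add_right natDegree_mul_le _).trans ?_)
    simpa [hconst] using natDegree_parabolicInitialForm_le p g
  have hpos := parabolicOrder_pos hzero hf₀
  omega

end ParabolicSeries

section Uniqueness

open Metric

variable {𝕜 : Type*} [RCLike 𝕜] {f : 𝕜 × 𝕜 → 𝕜} {p : 𝕜 × 𝕜} {r : ℝ}

theorem apply_parabola_eq_zero (hf : AnalyticOnNhd 𝕜 f (ball p r))
    (hseries : parabolicSeries p f = 0) {w e : 𝕜} (hmem : parabola p w e ∈ ball p r) :
    f (parabola p w e) = 0 := by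
  have hp : p ∈ ball p r := mem_ball_self (pos_of_mem_ball hmem)
  have hball : Set.MapsTo (parabola p w) (closedBall 0 ‖e‖) (ball p r) := by
    intro x hx
    rw [mem_closedBall_zero_iff] at hx
    rw [parabola, ← ball_prod_same] at hmem ⊢
    simp only [Set.mem_prod, mem_ball_iff_norm, add_sub_cancel_left, norm_pow, norm_mul] at hmem ⊢
    exact ⟨lt_of_le_of_lt (by gcongr) hmem.1, lt_of_le_of_lt (by gcongr) hmem.2⟩
  have hjet (n : ℕ) : parabolicJet p n f = 0 := by
    simpa [parabolicSeries, n.factorial_ne_zero] using congrArg (PowerSeries.coeff n) hseries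
  have hgerm : f ∘ parabola p w =ᶠ[𝓝 0] 0 := by
    refine analyticOrderAt_eq_top.1 (ENat.eq_top_iff_forall_ge.2 fun n => ?_)
    rw [natCast_le_analyticOrderAt_iff_iteratedDeriv_eq_zero (analyticAt_comp_parabola (hf p hp) w)]
    intro i _
    rw [← eval_parabolicJet (hf p hp), hjet, Polynomial.eval_zero]
  have hcomp : AnalyticOnNhd 𝕜 (f ∘ parabola p w) (closedBall 0 ‖e‖) :=
    hf.comp (fun x _ => analyticAt_parabola p w x) hball
  exact hcomp.eqOn_zero_of_preconnected_of_eventuallyEq_zero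
    (convex_closedBall 0 ‖e‖).isPreconnected (mem_closedBall_self (norm_nonneg e)) hgerm (by simp)

/-- The parabolas through `p` do not fill a neighbourhood of `p`, but they fill one of every nearby
point `(p.1 + e², p.2)` with `e ≠ 0`, from which the identity theorem reaches `p`. -/
theorem eventuallyEq_zero_of_parabolicSeries_eq_zero (hf : AnalyticAt 𝕜 f p)
    (hseries : parabolicSeries p f = 0) : f =ᶠ[𝓝 p] 0 := by
  obtain ⟨r, hr, hfr⟩ := eventually_nhds_iff_ball.1 hf.eventually_analyticAt
  obtain ⟨e, hmem, he⟩ : ∃ e : 𝕜, (p.1 + e ^ 2, p.2) ∈ ball p r ∧ e ≠ 0 := by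
    have hcont : Continuous fun e : 𝕜 => (p.1 + e ^ 2, p.2) := by fun_prop
    have hnear : ∀ᶠ e in 𝓝[≠] (0 : 𝕜), (p.1 + e ^ 2, p.2) ∈ ball p r :=
      nhdsWithin_le_nhds (hcont.continuousAt.eventually_mem (isOpen_ball.mem_nhds (by simpa)))
    exact (hnear.and self_mem_nhdsWithin).exists
  have hsq : map (fun x => p.1 + x ^ 2) (𝓝 e) = 𝓝 (p.1 + e ^ 2) :=
    HasStrictDerivAt.map_nhds_eq ((hasStrictDerivAt_pow 2 e).const_add p.1) (by simpa)
  have hopen : f =ᶠ[𝓝 (p.1 + e ^ 2, p.2)] 0 := by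
    have hcont : Continuous fun q : 𝕜 × 𝕜 => (p.1 + q.1 ^ 2, q.2) := by fun_prop
    rw [nhds_prod_eq, ← hsq, ← map_id (f := 𝓝 p.2), prod_map_map_eq, ← nhds_prod_eq]
    refine eventually_map.2 ?_
    filter_upwards [continuousAt_fst.eventually_ne he,
      hcont.continuousAt.eventually_mem (isOpen_ball.mem_nhds hmem)] with ⟨x, z⟩ hx hxz
    have hparabola : parabola p ((z - p.2) / x) x = (p.1 + x ^ 2, z) := by
      simp [parabola, div_mul_cancel₀ _ hx]
    exact (congrArg f hparabola).symm.trans (apply_parabola_eq_zero hfr hseries (hparabola ▸ hxz))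
  have hzero := AnalyticOnNhd.eqOn_zero_of_preconnected_of_eventuallyEq_zero hfr
    (convex_ball p r).isPreconnected hmem hopen
  exact hzero.eventuallyEq_of_mem (ball_mem_nhds p hr)

end Uniqueness

theorem square_factor_not_caloric_general {𝕜 : Type*} [RCLike 𝕜] {A A₁ A₂ : 𝕜 × 𝕜 → 𝕜}
    {p : 𝕜 × 𝕜} (hA₁ : AnalyticAt 𝕜 A₁ p) (hA₂ : AnalyticAt 𝕜 A₂ p)
    (hfac : A =ᶠ[𝓝 p] A₁ ^ 2 * A₂) (hne : ∃ᶠ q in 𝓝 p, A q ≠ 0) (hzero : A₁ p = 0) :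
    ∃ᶠ q in 𝓝 p,
      deriv (fun s => A (s, q.2)) q.1 ≠ iteratedDeriv 2 (fun w => A (q.1, w)) q.2 := by
  intro hcaloric
  simp only [not_not] at hcaloric
  rw [sq] at hfac
  have hprod : AnalyticAt 𝕜 (A₁ * A₁ * A₂) p := (hA₁.mul hA₁).mul hA₂
  have hheat := timeDeriv_eventuallyEq_of_caloric (hprod.congr hfac.symm) hcaloric
  refine apply_ne_zero_of_mul_self_mul_caloric hA₁ hA₂ (fun hseries => hne ?_) ?_ hzero
  · have hvanish := hfac.trans (eventuallyEq_zero_of_parabolicSeries_eq_zero hprod hseries)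
    exact hvanish.mono fun _ => not_not.2
  · exact (timeDeriv_congr hfac).symm.trans
      (hheat.trans (spaceDeriv_congr (spaceDeriv_congr hfac)))

/-- If `A = A₁² · A₂` with `A, A₁, A₂` analytic on all of `ℂ²`, `A ≢ 0`,
and `A₁` vanishes somewhere, then `A` cannot satisfy the heat equation: at some point
`∂_t A ≠ ∂_z² A`. -/
theorem square_factor_not_caloric
    (A A₁ A₂ : ℂ × ℂ → ℂ)
    (hA : AnalyticOnNhd ℂ A Set.univ)
    (hA₁ : AnalyticOnNhd ℂ A₁ Set.univ)
    (hA₂ : AnalyticOnNhd ℂ A₂ Set.univ)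
    (hfac : ∀ p : ℂ × ℂ, A p = (A₁ p) ^ 2 * A₂ p)
    (hne : ∃ p : ℂ × ℂ, A p ≠ 0)
    (t₀ z₀ : ℂ) (hzero : A₁ (t₀, z₀) = 0) :
    ∃ t z : ℂ, deriv (fun s => A (s, z)) t ≠ iteratedDeriv 2 (fun w => A (t, w)) z := by
  have hfreq : ∃ᶠ q in 𝓝 (t₀, z₀), A q ≠ 0 := by
    intro hzeros
    obtain ⟨p, hp⟩ := hne
    have hA₀ : A = 0 := hA.eq_of_eventuallyEq analyticOnNhd_const (hzeros.mono fun _ => not_not.1)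
    exact hp (congrFun hA₀ p)
  obtain ⟨⟨t, z⟩, htz⟩ := (square_factor_not_caloric_general (hA₁ _ trivial) (hA₂ _ trivial)
    (.of_forall hfac) hfreq hzero).exists
  exact ⟨t, z, htz⟩
end

section
/- Let F : ℂ × ℂ → ℂ be an entire caloric function with F(t,z) ≠ 0 for every (t,z) ∈ ℂ². Then there exist constants c, λ ∈ ℂ with c ≠ 0 such that F(t,z) = c·e^{λ²t + λz} for all (t,z) ∈ ℂ². -/
open Filter

/-- An entire caloric function: `F : ℂ × ℂ → ℂ` is analytic on all of `ℂ²` and satisfies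
the heat equation `∂_t F(t,z) = ∂_z² F(t,z)` everywhere. -/
def IsEntireCaloric (F : ℂ × ℂ → ℂ) : Prop :=
  AnalyticOnNhd ℂ F Set.univ ∧
    ∀ t z : ℂ, deriv (fun s => F (s, z)) t = iteratedDeriv 2 (fun w => F (t, w)) z

/-! By the heat equation, `∂_z ^ (2n) F` is `∂_t ^ n F` and `∂_z ^ (2n + 1) F` is `∂_t ^ n (∂_z F)`,
so Cauchy's estimate in `t` on a disc of radius `R` bounds both by `M n! / R ^ n`. As `R` is
arbitrary, the Taylor series in `z` gives `‖F(t, z)‖ ≤ C exp (ε ‖z‖²)` for every `ε > 0`. If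
`F(t₀, ·)` has no zero, the real part of its logarithm is thus at most `log C + ε ‖z‖²`, and by
Borel–Carathéodory the logarithm is affine. Since the slice at `t₀` determines an entire caloric
function through its Taylor series in `t`, the exponential solution with the same slice is `F`. -/

section

open Metric Topology
open scoped Nat ContDiff

section DirDeriv

variable {𝕜 E G : Type*} [NontriviallyNormedField 𝕜] [NormedAddCommGroup E] [NormedSpace 𝕜 E]
  [NormedAddCommGroup G] [NormedSpace 𝕜 G] {F : E → G} {v w : E}

variable (𝕜) in
/-- The derivative of `F` in the fixed direction `v`, as an operator on functions, so that the
`n`-th derivative in the direction `v` is the iterate `(dirDeriv 𝕜 v)^[n] F`. Being a line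
derivative, it agrees with derivatives of slices without any regularity of `F`. -/
noncomputable def dirDeriv (v : E) (F : E → G) : E → G := fun p => lineDeriv 𝕜 F p v

theorem iteratedDeriv_comp_add_smul (n : ℕ) (F : E → G) (p v : E) (s : 𝕜) :
    iteratedDeriv n (fun r : 𝕜 => F (p + r • v)) s = (dirDeriv 𝕜 v)^[n] F (p + s • v) := by
  induction n generalizing F with
  | zero => rfl
  | succ n ih =>
    have deriv_line :
        deriv (fun r : 𝕜 => F (p + r • v)) = fun r : 𝕜 => dirDeriv 𝕜 v F (p + r • v) := by
      funext r
      simp only [dirDeriv, lineDeriv, add_assoc, ← add_smul,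
        deriv_comp_const_add (fun r : 𝕜 => F (p + r • v)), add_zero]
    rw [iteratedDeriv_succ', deriv_line, ih, Function.iterate_succ_apply]

theorem iteratedDeriv_slice_fst (n : ℕ) (F : 𝕜 × E → G) (s : 𝕜) (y : E) :
    iteratedDeriv n (fun r => F (r, y)) s = (dirDeriv 𝕜 (1, 0))^[n] F (s, y) := by
  simpa using iteratedDeriv_comp_add_smul n F (0, y) (1, 0) s

theorem iteratedDeriv_slice_snd (n : ℕ) (F : E × 𝕜 → G) (x : E) (s : 𝕜) :
    iteratedDeriv n (fun r => F (x, r)) s = (dirDeriv 𝕜 (0, 1))^[n] F (x, s) := by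
  simpa using iteratedDeriv_comp_add_smul n F (x, 0) (0, 1) s

theorem dirDeriv_eq_fderiv (hF : Differentiable 𝕜 F) :
    dirDeriv 𝕜 v F = fun p => fderiv 𝕜 F p v :=
  funext fun p => (hF p).lineDeriv_eq_fderiv

theorem contDiff_dirDeriv {m n : ℕ∞ω} (hF : ContDiff 𝕜 n F) (hmn : m + 1 ≤ n) :
    ContDiff 𝕜 m (dirDeriv 𝕜 v F) := by
  have n_ne_zero : n ≠ 0 := (zero_lt_one.trans_le (le_add_self.trans hmn)).ne'
  rw [dirDeriv_eq_fderiv (hF.differentiable n_ne_zero)]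
  exact (hF.fderiv_right hmn).clm_apply contDiff_const

theorem contDiff_iterate_dirDeriv (hF : ContDiff 𝕜 ∞ F) (n : ℕ) :
    ContDiff 𝕜 ∞ ((dirDeriv 𝕜 v)^[n] F) := by
  induction n with
  | zero => exact hF
  | succ n ih =>
    rw [Function.iterate_succ_apply']
    exact contDiff_dirDeriv ih le_rfl

theorem dirDeriv_comm {n : ℕ∞ω} (hF : ContDiff 𝕜 n F) (hn : minSmoothness 𝕜 2 ≤ n) :
    dirDeriv 𝕜 v (dirDeriv 𝕜 w F) = dirDeriv 𝕜 w (dirDeriv 𝕜 v F) := by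
  have two_le : (2 : ℕ∞ω) ≤ n := le_minSmoothness.trans hn
  have differentiable_fderiv : Differentiable 𝕜 (fderiv 𝕜 F) :=
    (hF.fderiv_right (m := 1) two_le).differentiable one_ne_zero
  have second_derivative (u u' : E) :
      dirDeriv 𝕜 u (dirDeriv 𝕜 u' F) = fun p => fderiv 𝕜 (fderiv 𝕜 F) p u u' := by
    rw [dirDeriv_eq_fderiv (hF.differentiable (two_pos.trans_le two_le).ne'),
      dirDeriv_eq_fderiv (differentiable_fderiv.clm_apply (differentiable_const u'))]
    funext p
    rw [fderiv_clm_apply (differentiable_fderiv p) (differentiableAt_const u')]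
    simp
  rw [second_derivative, second_derivative]
  exact funext fun p => hF.contDiffAt.isSymmSndFDerivAt hn v w

end DirDeriv

section IterateDirDeriv

variable {𝕜 E G : Type*} [RCLike 𝕜] [NormedAddCommGroup E] [NormedSpace 𝕜 E]
  [NormedAddCommGroup G] [NormedSpace 𝕜 G] {F : E → G} {v w : E}

theorem dirDeriv_iterate_comm (hF : ContDiff 𝕜 ∞ F) (n : ℕ) :
    dirDeriv 𝕜 v ((dirDeriv 𝕜 w)^[n] F) = (dirDeriv 𝕜 w)^[n] (dirDeriv 𝕜 v F) := by
  induction n with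
  | zero => rfl
  | succ n ih =>
    rw [Function.iterate_succ_apply', Function.iterate_succ_apply', ← ih]
    exact dirDeriv_comm (contDiff_iterate_dirDeriv hF n)
      (by simpa using ENat.LEInfty.out)

theorem iterate_dirDeriv_of_dirDeriv_eq {k : ℕ} (hF : ContDiff 𝕜 ∞ F)
    (hvw : dirDeriv 𝕜 v F = (dirDeriv 𝕜 w)^[k] F) (n r : ℕ) :
    (dirDeriv 𝕜 w)^[k * n + r] F = (dirDeriv 𝕜 v)^[n] ((dirDeriv 𝕜 w)^[r] F) := by
  induction n with
  | zero => simp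
  | succ n ih =>
    calc (dirDeriv 𝕜 w)^[k * (n + 1) + r] F
        = (dirDeriv 𝕜 w)^[k * n + r] ((dirDeriv 𝕜 w)^[k] F) := by
          rw [← Function.iterate_add_apply, mul_add_one, add_right_comm]
      _ = dirDeriv 𝕜 v ((dirDeriv 𝕜 w)^[k * n + r] F) := by
          rw [← hvw, dirDeriv_iterate_comm hF]
      _ = (dirDeriv 𝕜 v)^[n + 1] ((dirDeriv 𝕜 w)^[r] F) := by
          rw [ih, Function.iterate_succ_apply']

end IterateDirDeriv

section TaylorBounds

variable {E : Type*} [NormedAddCommGroup E] [NormedSpace ℂ E]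

theorem norm_taylorTerm_le {a : E} {z : ℂ} {M R : ℝ} {n : ℕ} (hR : 0 < R)
    (ha : ‖a‖ ≤ n ! * M / R ^ n) (r : ℕ) :
    ‖((2 * n + r)! : ℂ)⁻¹ • z ^ (2 * n + r) • a‖ ≤
      M * ‖z‖ ^ r * ((‖z‖ ^ 2 / R) ^ n / n !) := by
  have factorial_sq_le : (n ! * n ! : ℝ) ≤ (2 * n + r)! := by
    have : n ! * n ! ≤ (2 * n + r)! := calc
      n ! * n ! ≤ (n + n)! :=
        Nat.le_of_dvd (Nat.factorial_pos _) (Nat.factorial_mul_factorial_dvd_factorial_add n n)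
      _ ≤ (2 * n + r)! := Nat.factorial_le (by lia)
    exact_mod_cast this
  calc ‖((2 * n + r)! : ℂ)⁻¹ • z ^ (2 * n + r) • a‖
      = ((2 * n + r)! : ℝ)⁻¹ * (‖z‖ ^ (2 * n + r) * ‖a‖) := by
        simp only [norm_smul, norm_inv, norm_pow, Complex.norm_natCast]
    _ ≤ (n ! * n ! : ℝ)⁻¹ * (‖z‖ ^ (2 * n + r) * (n ! * M / R ^ n)) := by gcongr
    _ = M * ‖z‖ ^ r * ((‖z‖ ^ 2 / R) ^ n / n !) := by
        rw [div_pow, ← pow_mul, pow_add]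
        field_simp

theorem norm_le_of_norm_iteratedDeriv_le [CompleteSpace E] {f : ℂ → E} (hf : Differentiable ℂ f)
    {M₀ M₁ R : ℝ} (hR : 0 < R)
    (heven : ∀ n : ℕ, ‖iteratedDeriv (2 * n) f 0‖ ≤ n ! * M₀ / R ^ n)
    (hodd : ∀ n : ℕ, ‖iteratedDeriv (2 * n + 1) f 0‖ ≤ n ! * M₁ / R ^ n) (z : ℂ) :
    ‖f z‖ ≤ (M₀ + M₁ * ‖z‖) * Real.exp (‖z‖ ^ 2 / R) := by
  set u : ℕ → E := fun m => (m ! : ℂ)⁻¹ • z ^ m • iteratedDeriv m f 0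
  have taylor : HasSum u (f z) := by
    simpa only [sub_zero] using Complex.hasSum_taylorSeries_of_entire hf 0 z
  have even_le (n : ℕ) : ‖u (2 * n)‖ ≤ M₀ * ((‖z‖ ^ 2 / R) ^ n / n !) := by
    simpa only [add_zero, pow_zero, mul_one] using norm_taylorTerm_le hR (heven n) 0
  have odd_le (n : ℕ) : ‖u (2 * n + 1)‖ ≤ M₁ * ‖z‖ * ((‖z‖ ^ 2 / R) ^ n / n !) := by
    simpa only [pow_one] using norm_taylorTerm_le hR (hodd n) 1
  have exp_series : HasSum (fun n : ℕ => (‖z‖ ^ 2 / R) ^ n / n !) (Real.exp (‖z‖ ^ 2 / R)) := by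
    rw [Real.exp_eq_exp_ℝ]
    exact NormedSpace.expSeries_div_hasSum_exp _
  have even_series := exp_series.mul_left M₀
  have odd_series := exp_series.mul_left (M₁ * ‖z‖)
  calc ‖f z‖ = ‖∑' n, u (2 * n) + ∑' n, u (2 * n + 1)‖ := by
        rw [← taylor.tsum_eq, tsum_even_add_odd (.of_norm_bounded even_series.summable even_le)
          (.of_norm_bounded odd_series.summable odd_le)]
    _ ≤ M₀ * Real.exp (‖z‖ ^ 2 / R) + M₁ * ‖z‖ * Real.exp (‖z‖ ^ 2 / R) :=
        norm_add_le_of_le (tsum_of_norm_bounded even_series even_le)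
          (tsum_of_norm_bounded odd_series odd_le)
    _ = (M₀ + M₁ * ‖z‖) * Real.exp (‖z‖ ^ 2 / R) := (add_mul _ _ _).symm

end TaylorBounds

theorem affine_mul_exp_half_sq_le {a b ε : ℝ} (ha : 0 ≤ a) (hb : 0 ≤ b) (hε : 0 < ε) (x : ℝ) :
    (a + b * x) * Real.exp (ε / 2 * x ^ 2) ≤
      (a + b * (1 + 1 / (2 * ε))) * Real.exp (ε * x ^ 2) := by
  set y : ℝ := ε / 2 * x ^ 2 with y_def
  have y_nonneg : 0 ≤ y := by positivity
  have le_quadratic : x ≤ 1 / (2 * ε) + y := by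
    have square_eq : 1 / (2 * ε) + y - x = (1 - ε * x) ^ 2 / (2 * ε) := by
      rw [y_def]
      field_simp
      ring
    have : 0 ≤ (1 - ε * x) ^ 2 / (2 * ε) := by positivity
    linarith
  have affine_le : a + b * x ≤ (a + b * (1 + 1 / (2 * ε))) * Real.exp y := calc
    a + b * x ≤ a + b * (1 / (2 * ε) + y) := by gcongr
    _ ≤ (a + b * (1 + 1 / (2 * ε))) * (y + 1) := by
      have : 0 ≤ b * (1 / (2 * ε)) * y := by positivity
      nlinarith [mul_nonneg ha y_nonneg]
    _ ≤ (a + b * (1 + 1 / (2 * ε))) * Real.exp y := by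
      gcongr
      exact Real.add_one_le_exp y
  calc (a + b * x) * Real.exp y
      ≤ (a + b * (1 + 1 / (2 * ε))) * Real.exp y * Real.exp y := by gcongr
    _ = (a + b * (1 + 1 / (2 * ε))) * Real.exp (ε * x ^ 2) := by
      rw [mul_assoc, ← Real.exp_add, y_def, ← add_mul, add_halves]

theorem norm_le_of_re_le {g : ℂ → ℂ} {M r : ℝ} {z : ℂ} (hM : 0 < M) (hr : 0 < r)
    (hg : DifferentiableOn ℂ g (ball 0 (2 * r))) (hre : ∀ x ∈ ball 0 (2 * r), (g x).re ≤ M)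
    (hz : ‖z‖ ≤ r) : ‖g z‖ ≤ 2 * M + 3 * ‖g 0‖ := by
  have gap_pos : 0 < 2 * r - ‖z‖ := by linarith
  refine (Complex.borelCaratheodory hM hg hre (by linarith) ?_).trans (add_le_add ?_ ?_)
  · rw [mem_ball_zero_iff]
    linarith
  · rw [div_le_iff₀ gap_pos]
    nlinarith
  · rw [div_le_iff₀ gap_pos]
    nlinarith [norm_nonneg (g 0)]

theorem norm_iteratedDeriv_le_of_re_le {g : ℂ → ℂ} (hg : Differentiable ℂ g) {C ε : ℝ}
    (hε : 0 < ε) {n m : ℕ} (hn : n ≠ 0) (hnm : n ≤ m)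
    (hre : ∀ z, (g z).re ≤ C + ε * ‖z‖ ^ n) :
    ‖iteratedDeriv m g 0‖ ≤ m ! * (2 * 2 ^ n) * ε := by
  set A : ℝ := m ! * (2 * |C| + 3 * ‖g 0‖)
  have cauchy {r : ℝ} (hr : 1 ≤ r) :
      ‖iteratedDeriv m g 0‖ ≤ A / r ^ n + m ! * (2 * 2 ^ n) * ε := by
    have r_pos : 0 < r := by linarith
    have re_le (x : ℂ) (hx : x ∈ ball 0 (2 * r)) : (g x).re ≤ |C| + ε * (2 * r) ^ n := by
      rw [mem_ball_zero_iff] at hx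
      exact (hre x).trans (by gcongr; exact le_abs_self C)
    have norm_le (z : ℂ) (hz : z ∈ sphere 0 r) :
        ‖g z‖ ≤ 2 * (|C| + ε * (2 * r) ^ n) + 3 * ‖g 0‖ :=
      norm_le_of_re_le (by positivity) r_pos hg.differentiableOn re_le
        (mem_sphere_zero_iff_norm.1 hz).le
    calc ‖iteratedDeriv m g 0‖
        ≤ m ! * (2 * (|C| + ε * (2 * r) ^ n) + 3 * ‖g 0‖) / r ^ m :=
          Complex.norm_iteratedDeriv_le_of_forall_mem_sphere_norm_le m r_pos hg.diffContOnCl norm_le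
      _ ≤ m ! * (2 * (|C| + ε * (2 * r) ^ n) + 3 * ‖g 0‖) / r ^ n := by gcongr
      _ = A / r ^ n + m ! * (2 * 2 ^ n) * ε := by
          simp only [A, mul_pow]
          field_simp
          ring
  have bound_tendsto : Tendsto (fun r : ℝ => A / r ^ n + m ! * (2 * 2 ^ n) * ε) atTop
      (𝓝 (m ! * (2 * 2 ^ n) * ε)) := by
    simpa only [zero_add] using
      ((tendsto_pow_atTop hn).const_div_atTop A).add_const (m ! * (2 * 2 ^ n) * ε)
  exact ge_of_tendsto bound_tendsto ((eventually_ge_atTop 1).mono fun r hr => cauchy hr)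

theorem eq_sum_range_of_re_le {g : ℂ → ℂ} (hg : Differentiable ℂ g) {n : ℕ} (hn : n ≠ 0)
    (hre : ∀ ε > 0, ∃ C : ℝ, ∀ z, (g z).re ≤ C + ε * ‖z‖ ^ n) (z : ℂ) :
    g z = ∑ m ∈ Finset.range n, (m ! : ℂ)⁻¹ * z ^ m * iteratedDeriv m g 0 := by
  have iteratedDeriv_eq_zero (m : ℕ) (hnm : n ≤ m) : iteratedDeriv m g 0 = 0 := by
    have bound_tendsto : Tendsto (fun ε : ℝ => m ! * (2 * 2 ^ n) * ε) (𝓝[>] 0) (𝓝 0) := by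
      refine tendsto_nhdsWithin_of_tendsto_nhds ?_
      simpa only [mul_zero] using (continuous_const_mul (m ! * (2 * 2 ^ n) : ℝ)).tendsto 0
    refine norm_le_zero_iff.1 (ge_of_tendsto bound_tendsto ?_)
    filter_upwards [self_mem_nhdsWithin] with ε hε
    obtain ⟨C, hC⟩ := hre ε hε
    exact norm_iteratedDeriv_le_of_re_le hg hε hn hnm hC
  have taylor := Complex.hasSum_taylorSeries_of_entire hg 0 z
  simp only [sub_zero, smul_eq_mul, ← mul_assoc] at taylor
  refine taylor.unique (hasSum_sum_of_ne_finset_zero fun m hm => ?_)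
  rw [iteratedDeriv_eq_zero m (by simpa using hm), mul_zero]

theorem exists_eq_exp_of_ne_zero {f : ℂ → ℂ} (hf : Differentiable ℂ f) (hne : ∀ z, f z ≠ 0) :
    ∃ g : ℂ → ℂ, Differentiable ℂ g ∧ ∀ z, f z = Complex.exp (g z) := by
  have differentiable_logDeriv : Differentiable ℂ (fun z => deriv f z / f z) :=
    hf.deriv.div hf hne
  obtain ⟨g, hg_zero, hg⟩ :=
    differentiable_logDeriv.isExactOn_univ.with_val_at 0 (Complex.log (f 0))
  have hasDerivAt_g (z : ℂ) : HasDerivAt g (deriv f z / f z) z := hg z trivial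
  have hasDerivAt_quotient (z : ℂ) : HasDerivAt (fun z => f z * Complex.exp (-g z)) 0 z := by
    convert! (hf z).hasDerivAt.mul (hasDerivAt_g z).neg.cexp using 1
    have := hne z
    field_simp
    ring
  refine ⟨g, fun z => (hasDerivAt_g z).differentiableAt, fun z => ?_⟩
  have quotient_eq_one : f z * Complex.exp (-g z) = 1 := calc
    f z * Complex.exp (-g z) = f 0 * Complex.exp (-g 0) :=
      is_const_of_deriv_eq_zero (fun w => (hasDerivAt_quotient w).differentiableAt)
        (fun w => (hasDerivAt_quotient w).deriv) z 0
    _ = 1 := by rw [hg_zero, Complex.exp_neg, Complex.exp_log (hne 0), mul_inv_cancel₀ (hne 0)]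
  rwa [Complex.exp_neg, mul_inv_eq_one₀ (Complex.exp_ne_zero _)] at quotient_eq_one

theorem exists_eq_mul_exp_of_norm_le {f : ℂ → ℂ} (hf : Differentiable ℂ f) (hne : ∀ z, f z ≠ 0)
    (hgrowth : ∀ ε > 0, ∃ C : ℝ, ∀ z, ‖f z‖ ≤ C * Real.exp (ε * ‖z‖ ^ 2)) :
    ∃ b : ℂ, ∀ z, f z = f 0 * Complex.exp (b * z) := by
  obtain ⟨g, hg, hfg⟩ := exists_eq_exp_of_ne_zero hf hne
  have re_le : ∀ ε > 0, ∃ C : ℝ, ∀ z, (g z).re ≤ C + ε * ‖z‖ ^ 2 := by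
    intro ε hε
    obtain ⟨C, hC⟩ := hgrowth ε hε
    have C_pos : 0 < C :=
      pos_of_mul_pos_left ((norm_pos_iff.2 (hne 0)).trans_le (hC 0)) (Real.exp_pos _).le
    refine ⟨Real.log C, fun z => Real.exp_le_exp.1 ?_⟩
    rw [← Complex.norm_exp, ← hfg, Real.exp_add, Real.exp_log C_pos]
    exact hC z
  have affine (z : ℂ) : g z = g 0 + z * deriv g 0 := by
    simpa [Finset.sum_range_succ] using eq_sum_range_of_re_le hg two_ne_zero re_le z
  refine ⟨deriv g 0, fun z => ?_⟩
  rw [hfg, hfg, affine z, Complex.exp_add, mul_comm z]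

namespace IsEntireCaloric

variable {F G : ℂ × ℂ → ℂ}

theorem contDiff (hF : IsEntireCaloric F) : ContDiff ℂ ∞ F :=
  contDiffOn_univ.1 hF.1.contDiffOn_of_completeSpace

theorem dirDeriv_time (hF : IsEntireCaloric F) :
    dirDeriv ℂ (1, 0) F = (dirDeriv ℂ (0, 1))^[2] F := by
  funext ⟨t, z⟩
  rw [← iteratedDeriv_slice_snd, ← hF.2, ← iteratedDeriv_one, iteratedDeriv_slice_fst,
    Function.iterate_one]

theorem iteratedDeriv_space_two_mul_add (hF : IsEntireCaloric F) (n r : ℕ) (t z : ℂ) :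
    iteratedDeriv (2 * n + r) (fun w => F (t, w)) z =
      iteratedDeriv n (fun s => iteratedDeriv r (fun w => F (s, w)) z) t := by
  simp only [iteratedDeriv_slice_snd]
  rw [iterate_dirDeriv_of_dirDeriv_eq hF.contDiff hF.dirDeriv_time, iteratedDeriv_slice_fst]

theorem differentiable_iteratedDeriv_space (hF : IsEntireCaloric F) (r : ℕ) (z : ℂ) :
    Differentiable ℂ (fun s => iteratedDeriv r (fun w => F (s, w)) z) := by
  simp only [iteratedDeriv_slice_snd]
  exact ((contDiff_iterate_dirDeriv hF.contDiff r).differentiable (by simp)).comp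
    (differentiable_id.prodMk (differentiable_const z))

theorem differentiable_time (hF : IsEntireCaloric F) (z : ℂ) :
    Differentiable ℂ (fun s => F (s, z)) :=
  (hF.contDiff.differentiable (by simp)).comp
    (differentiable_id.prodMk (differentiable_const z))

theorem differentiable_space (hF : IsEntireCaloric F) (t : ℂ) :
    Differentiable ℂ (fun w => F (t, w)) :=
  (hF.contDiff.differentiable (by simp)).comp
    ((differentiable_const t).prodMk differentiable_id)

theorem exists_norm_iteratedDeriv_space_le (hF : IsEntireCaloric F) (r : ℕ) (t z : ℂ) {R : ℝ}
    (hR : 0 < R) : ∃ M : ℝ, ∀ n : ℕ,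
      ‖iteratedDeriv (2 * n + r) (fun w => F (t, w)) z‖ ≤ n ! * M / R ^ n := by
  have differentiable_slice := hF.differentiable_iteratedDeriv_space r z
  obtain ⟨M, hM⟩ :=
    (isCompact_sphere t R).exists_bound_of_continuousOn differentiable_slice.continuous.continuousOn
  refine ⟨M, fun n => ?_⟩
  rw [hF.iteratedDeriv_space_two_mul_add]
  exact Complex.norm_iteratedDeriv_le_of_forall_mem_sphere_norm_le n hR
    differentiable_slice.diffContOnCl hM

theorem exists_norm_le (hF : IsEntireCaloric F) (t : ℂ) {ε : ℝ} (hε : 0 < ε) :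
    ∃ C : ℝ, ∀ z, ‖F (t, z)‖ ≤ C * Real.exp (ε * ‖z‖ ^ 2) := by
  obtain ⟨M₀, hM₀⟩ := hF.exists_norm_iteratedDeriv_space_le 0 t 0 (R := 2 / ε) (by positivity)
  obtain ⟨M₁, hM₁⟩ := hF.exists_norm_iteratedDeriv_space_le 1 t 0 (R := 2 / ε) (by positivity)
  have M₀_nonneg : 0 ≤ M₀ := (norm_nonneg _).trans (by simpa using hM₀ 0)
  have M₁_nonneg : 0 ≤ M₁ := (norm_nonneg _).trans (by simpa using hM₁ 0)
  refine ⟨M₀ + M₁ * (1 + 1 / (2 * ε)), fun z => ?_⟩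
  calc ‖F (t, z)‖
      ≤ (M₀ + M₁ * ‖z‖) * Real.exp (‖z‖ ^ 2 / (2 / ε)) :=
        norm_le_of_norm_iteratedDeriv_le (hF.differentiable_space t) (by positivity) hM₀ hM₁ z
    _ = (M₀ + M₁ * ‖z‖) * Real.exp (ε / 2 * ‖z‖ ^ 2) := by
        congr 2
        field_simp
    _ ≤ (M₀ + M₁ * (1 + 1 / (2 * ε))) * Real.exp (ε * ‖z‖ ^ 2) :=
        affine_mul_exp_half_sq_le M₀_nonneg M₁_nonneg hε ‖z‖

theorem eq_of_slice_eq (hF : IsEntireCaloric F) (hG : IsEntireCaloric G) {t₀ : ℂ}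
    (hslice : ∀ z, F (t₀, z) = G (t₀, z)) : F = G := by
  funext ⟨t, z⟩
  have iteratedDeriv_eq (n : ℕ) :
      iteratedDeriv n (fun s => F (s, z)) t₀ = iteratedDeriv n (fun s => G (s, z)) t₀ := by
    have hF_n := hF.iteratedDeriv_space_two_mul_add n 0 t₀ z
    have hG_n := hG.iteratedDeriv_space_two_mul_add n 0 t₀ z
    simp only [add_zero, iteratedDeriv_zero] at hF_n hG_n
    rw [← hF_n, ← hG_n, funext hslice]
  have taylor_F := Complex.hasSum_taylorSeries_of_entire (hF.differentiable_time z) t₀ t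
  have taylor_G := Complex.hasSum_taylorSeries_of_entire (hG.differentiable_time z) t₀ t
  simp only [iteratedDeriv_eq] at taylor_F
  exact taylor_F.unique taylor_G

end IsEntireCaloric

theorem isEntireCaloric_exp (c lam : ℂ) :
    IsEntireCaloric fun p => c * Complex.exp (lam ^ 2 * p.1 + lam * p.2) := by
  refine ⟨fun p _ => analyticAt_const.mul
    ((analyticAt_const.mul analyticAt_fst).add (analyticAt_const.mul analyticAt_snd)).cexp,
    fun t z => ?_⟩
  rw [← iteratedDeriv_one]
  simp only [Complex.exp_add, iteratedDeriv_const_mul_field, iteratedDeriv_mul_const_field,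
    iteratedDeriv_cexp_const_mul]
  ring

theorem nonvanishing_caloric_is_exponential_general
    (F : ℂ × ℂ → ℂ) (hF : IsEntireCaloric F) (t₀ : ℂ) (hne : ∀ z : ℂ, F (t₀, z) ≠ 0) :
    ∃ c lam : ℂ, c ≠ 0 ∧
      ∀ t z : ℂ, F (t, z) = c * Complex.exp (lam ^ 2 * t + lam * z) := by
  obtain ⟨lam, hlam⟩ := exists_eq_mul_exp_of_norm_le (hF.differentiable_space t₀) hne
    fun ε hε => hF.exists_norm_le t₀ hε
  set c := F (t₀, 0) * Complex.exp (-(lam ^ 2 * t₀))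
  have slice_eq (z : ℂ) : F (t₀, z) = c * Complex.exp (lam ^ 2 * t₀ + lam * z) := by
    rw [hlam, mul_assoc, ← Complex.exp_add, neg_add_cancel_left]
  have eq_exp := hF.eq_of_slice_eq (isEntireCaloric_exp c lam) slice_eq
  exact ⟨c, lam, mul_ne_zero (hne 0) (Complex.exp_ne_zero _), fun t z => congrFun eq_exp (t, z)⟩

end

/-- An entire caloric function that never vanishes has the form
`F(t,z) = c e^{λ²t + λz}` for some constants `c ≠ 0` and `λ`. -/
theorem nonvanishing_caloric_is_exponential
    (F : ℂ × ℂ → ℂ) (hF : IsEntireCaloric F)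
    (hne : ∀ t z : ℂ, F (t, z) ≠ 0) :
    ∃ c lam : ℂ, c ≠ 0 ∧
      ∀ t z : ℂ, F (t, z) = c * Complex.exp (lam ^ 2 * t + lam * z) := by
  exact nonvanishing_caloric_is_exponential_general F hF 0 (hne 0)
end

section
/- Let F : ℂ × ℂ → ℂ be an entire caloric function which is even in its second variable, i.e. F(t, −z) = F(t, z) for all (t,z) ∈ ℂ². Then there exists a function Φ : ℂ × ℂ → ℂ, analytic on all of ℂ², such that F(t,z) = Φ(t, z²) for all (t,z) ∈ ℂ², and Φ satisfies the degenerate heat-type equation ∂_t Φ(t,μ) = 4μ·∂_μ² Φ(t,μ) + 2·∂_μ Φ(t,μ) for all (t,μ) ∈ ℂ², where ∂_μ denotes the derivative in the second variable. -/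
open Filter

/-! The candidate is `Φ (t, μ) = F (t, √μ)`, well defined because `F` is even. It is continuous
because `z ↦ z ^ 2` is an open quotient map, and entire in `μ` because `√` has local holomorphic
branches off `0` and the singularity at `0` is removable. Osgood's lemma then makes `Φ` jointly
analytic: on a polydisc it is an iterated Cauchy integral, whose kernel depends analytically on the
point as an element of the Banach algebra of continuous functions on the torus. The equation for `Φ`
is the heat equation for `F` read through the chain rule at `μ = z ^ 2`. -/

open MeasureTheory Metric Real Set
open scoped Topology

theorem analyticAt_continuousMap_precomp {𝕜 V W X Y : Type*} [NontriviallyNormedField 𝕜]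
    [NormedAddCommGroup V] [NormedSpace 𝕜 V] [NormedAddCommGroup W] [NormedSpace 𝕜 W]
    [TopologicalSpace X] [CompactSpace X] [TopologicalSpace Y] [CompactSpace Y] (φ : C(X, Y))
    {κ : V → C(Y, W)} {v : V} (hκ : AnalyticAt 𝕜 κ v) :
    AnalyticAt 𝕜 (fun x => (κ x).comp φ) v :=
  let precomp : C(Y, W) →L[𝕜] C(X, W) := φ.compCLM 𝕜 W
  (precomp.analyticAt (κ v)).fun_comp hκ

variable {E : Type*} [NormedAddCommGroup E] [NormedSpace ℂ E]

section IntegralAgainstKernel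

variable {K : Type*} [TopologicalSpace K] [CompactSpace K] [MeasurableSpace K]
  [OpensMeasurableSpace K] {ν : Measure K} {g : K → E}

theorem integrable_continuousMap_smul (hg : Integrable g ν) (κ : C(K, ℂ)) :
    Integrable (fun k => κ k • g k) ν :=
  hg.bdd_smul ‖κ‖ κ.continuous.aestronglyMeasurable (.of_forall κ.norm_coe_le_norm)

/-- The integral `∫ κ • g ∂ν` of a fixed integrable function `g` against a continuous kernel `κ`
on a compact space, as a continuous linear map in `κ` for the supremum norm. -/
noncomputable def kernelIntegralCLM (hg : Integrable g ν) : C(K, ℂ) →L[ℂ] E :=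
  LinearMap.mkContinuous
    { toFun := fun κ => ∫ k, κ k • g k ∂ν
      map_add' := fun κ₁ κ₂ => by
        simpa only [ContinuousMap.add_apply, add_smul] using
          integral_add (integrable_continuousMap_smul hg κ₁) (integrable_continuousMap_smul hg κ₂)
      map_smul' := fun a κ => by
        simpa only [ContinuousMap.smul_apply, smul_assoc, RingHom.id_apply] using
          integral_smul a fun k => κ k • g k }
    (∫ k, ‖g k‖ ∂ν)
    fun κ => calc
      ‖∫ k, κ k • g k ∂ν‖ ≤ ∫ k, ‖κ‖ * ‖g k‖ ∂ν :=
        norm_integral_le_of_norm_le (hg.norm.const_mul ‖κ‖) <| .of_forall fun k =>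
          (norm_smul_le _ _).trans <|
            mul_le_mul_of_nonneg_right (κ.norm_coe_le_norm k) (norm_nonneg _)
      _ = (∫ k, ‖g k‖ ∂ν) * ‖κ‖ := by rw [integral_const_mul, mul_comm]

theorem analyticAt_integral_continuousMap_smul {V : Type*} [NormedAddCommGroup V]
    [NormedSpace ℂ V] {κ : V → C(K, ℂ)} {v : V} (hg : Integrable g ν) (hκ : AnalyticAt ℂ κ v) :
    AnalyticAt ℂ (fun x => ∫ k, κ x k • g k ∂ν) v :=
  ((kernelIntegralCLM hg).analyticAt (κ v)).fun_comp hκ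

end IntegralAgainstKernel

section CauchyKernel

/-- The compact interval `[0, 2π]` of angles parametrizing a circle in `ℂ`. Unlike the circle
itself it does not depend on the centre and the radius. -/
abbrev AngleInterval : Type := Icc (0 : ℝ) (2 * π)

/-- The circle of centre `c` and radius `R`, parametrized by the angle. -/
noncomputable def anglePath (c : ℂ) (R : ℝ) : C(AngleInterval, ℂ) where
  toFun θ := circleMap c R θ

/-- The uniform probability measure on the interval of angles, so that integrating along
`anglePath c R` computes `Real.circleAverage`. -/
noncomputable def angleMeasure : Measure AngleInterval :=
  ((2 * π)⁻¹.toNNReal • volume.restrict (Icc 0 (2 * π))).comap Subtype.val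

instance : IsFiniteMeasure angleMeasure := by
  unfold angleMeasure
  infer_instance

theorem integral_anglePath {G : Type*} [NormedAddCommGroup G] [NormedSpace ℝ G] (g : ℂ → G)
    (c : ℂ) (R : ℝ) :
    ∫ θ, g (anglePath c R θ) ∂angleMeasure = circleAverage g c R := by
  calc ∫ θ, g (anglePath c R θ) ∂angleMeasure
      = ∫ θ in Icc 0 (2 * π), g (circleMap c R θ)
          ∂((2 * π)⁻¹.toNNReal • volume.restrict (Icc 0 (2 * π))) :=
        integral_subtype_comap measurableSet_Icc fun θ => g (circleMap c R θ)
    _ = (2 * π)⁻¹ • ∫ θ in Icc 0 (2 * π), g (circleMap c R θ) := by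
        rw [Measure.restrict_smul, Measure.restrict_restrict measurableSet_Icc, inter_self,
          integral_smul_nnreal_measure, NNReal.smul_def, Real.coe_toNNReal _ (by positivity)]
    _ = circleAverage g c R := by
        rw [circleAverage_def, intervalIntegral.integral_of_le two_pi_pos.le,
          integral_Icc_eq_integral_Ioc]

/-- The kernel `ζ ↦ (ζ - c) / (ζ - w)` on the circle of centre `c` and radius `R`, which
reproduces holomorphic functions under averaging over the angle. `Ring.inverse` has the junk value
`0` when `w` lies on the circle. -/
noncomputable def cauchyKernel (c : ℂ) (R : ℝ) (w : ℂ) : C(AngleInterval, ℂ) :=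
  (anglePath c R - algebraMap ℂ _ c) * Ring.inverse (anglePath c R - algebraMap ℂ _ w)

variable {c w : ℂ} {R : ℝ}

theorem isUnit_anglePath_sub (hw : w ∈ ball c R) :
    IsUnit (anglePath c R - algebraMap ℂ _ w) :=
  (ContinuousMap.isUnit_iff_forall_ne_zero _).2 fun θ =>
    sub_ne_zero.2 (circleMap_ne_mem_ball hw θ)

theorem analyticAt_cauchyKernel (hw : w ∈ ball c R) : AnalyticAt ℂ (cauchyKernel c R) w := by
  have hinv : AnalyticAt ℂ Ring.inverse (anglePath c R - algebraMap ℂ _ w) :=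
    analyticAt_inverse (isUnit_anglePath_sub hw).unit
  have hsub : AnalyticAt ℂ (fun v => anglePath c R - algebraMap ℂ _ v) w :=
    analyticAt_const.sub ((algebraMapCLM ℂ C(AngleInterval, ℂ)).analyticAt w)
  exact analyticAt_const.mul (hinv.comp_of_eq hsub rfl)

theorem cauchyKernel_apply (hw : w ∈ ball c R) (θ : AngleInterval) :
    cauchyKernel c R w θ = (anglePath c R θ - c) / (anglePath c R θ - w) :=
  congrArg ((anglePath c R θ - c) * ·) <| eq_inv_of_mul_eq_one_right <|
    congrArg (· θ) (Ring.mul_inverse_cancel _ (isUnit_anglePath_sub hw))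

theorem integral_cauchyKernel_smul [CompleteSpace E] {g : ℂ → E}
    (hg : DiffContOnCl ℂ g (ball c R)) (hw : w ∈ ball c R) :
    ∫ θ, cauchyKernel c R w θ • g (anglePath c R θ) ∂angleMeasure = g w := by
  have hR : |R| = R := abs_of_pos (pos_of_mem_ball hw)
  simp only [cauchyKernel_apply hw]
  rw [integral_anglePath (fun ζ => ((ζ - c) / (ζ - w)) • g ζ)]
  exact DiffContOnCl.circleAverage_smul_div (hR.symm ▸ hg) (hR.symm ▸ hw)

end CauchyKernel

section Polydisc

variable {c d : ℂ} {R S : ℝ}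

theorem analyticAt_cauchyKernel_mul {p : ℂ × ℂ} (hp : p ∈ ball c R ×ˢ ball d S) :
    AnalyticAt ℂ (fun p : ℂ × ℂ => (cauchyKernel c R p.1).comp .fst *
      (cauchyKernel d S p.2).comp .snd) p :=
  (analyticAt_continuousMap_precomp .fst
    ((analyticAt_cauchyKernel hp.1).fun_comp analyticAt_fst)).mul
  (analyticAt_continuousMap_precomp .snd
    ((analyticAt_cauchyKernel hp.2).fun_comp analyticAt_snd))

theorem continuous_comp_anglePath {X : Type*} [TopologicalSpace X] {f : ℂ × ℂ → X}
    (hR : 0 ≤ R) (hS : 0 ≤ S) (hcont : ContinuousOn f (closedBall c R ×ˢ closedBall d S)) :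
    Continuous fun q : AngleInterval × AngleInterval =>
      f (anglePath c R q.1, anglePath d S q.2) :=
  hcont.comp_continuous (by fun_prop) fun q =>
    ⟨circleMap_mem_closedBall c hR q.1, circleMap_mem_closedBall d hS q.2⟩

theorem integral_cauchyKernel_mul_smul [CompleteSpace E] {f : ℂ × ℂ → E} {t z : ℂ}
    (hcont : ContinuousOn f (closedBall c R ×ˢ closedBall d S))
    (hfst : ∀ w ∈ closedBall d S, DiffContOnCl ℂ (fun s => f (s, w)) (ball c R))
    (hsnd : ∀ s ∈ closedBall c R, DiffContOnCl ℂ (fun w => f (s, w)) (ball d S))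
    (ht : t ∈ ball c R) (hz : z ∈ ball d S) :
    ∫ q, (cauchyKernel c R t q.1 * cauchyKernel d S z q.2) •
      f (anglePath c R q.1, anglePath d S q.2) ∂(angleMeasure.prod angleMeasure) = f (t, z) := by
  have hR : 0 ≤ R := (pos_of_mem_ball ht).le
  have htorus := continuous_comp_anglePath hR (pos_of_mem_ball hz).le hcont
  have hintegrable : Integrable (fun q : AngleInterval × AngleInterval =>
      (cauchyKernel c R t q.1 * cauchyKernel d S z q.2) •
        f (anglePath c R q.1, anglePath d S q.2)) (angleMeasure.prod angleMeasure) :=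
    Continuous.integrable_of_hasCompactSupport
      (((cauchyKernel c R t).continuous.fst'.mul (cauchyKernel d S z).continuous.snd').smul htorus)
      (.of_compactSpace _)
  rw [integral_prod _ hintegrable]
  simp only [mul_smul, integral_smul]
  calc ∫ θ, cauchyKernel c R t θ • ∫ η, cauchyKernel d S z η •
          f (anglePath c R θ, anglePath d S η) ∂angleMeasure ∂angleMeasure
      = ∫ θ, cauchyKernel c R t θ • f (anglePath c R θ, z) ∂angleMeasure := by
        congr! 3 with θ
        exact integral_cauchyKernel_smul (hsnd _ (circleMap_mem_closedBall c hR θ)) hz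
    _ = f (t, z) := integral_cauchyKernel_smul (hfst z (ball_subset_closedBall hz)) ht

end Polydisc

/-- **Osgood's lemma**. -/
theorem analyticOnNhd_of_continuousOn_of_differentiableAt_slices [CompleteSpace E]
    {f : ℂ × ℂ → E} {U : Set (ℂ × ℂ)} (hU : IsOpen U) (hcont : ContinuousOn f U)
    (hfst : ∀ p ∈ U, DifferentiableAt ℂ (fun s => f (s, p.2)) p.1)
    (hsnd : ∀ p ∈ U, DifferentiableAt ℂ (fun w => f (p.1, w)) p.2) :
    AnalyticOnNhd ℂ f U := by
  rintro ⟨c, d⟩ hp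
  obtain ⟨R, hR, hRU⟩ := nhds_basis_closedBall.mem_iff.1 (hU.mem_nhds hp)
  rw [← closedBall_prod_same] at hRU
  have hball : ball c R ×ˢ ball d R ∈ 𝓝 (c, d) :=
    prod_mem_nhds (ball_mem_nhds c hR) (ball_mem_nhds d hR)
  have hintegrable : Integrable (fun q => f (anglePath c R q.1, anglePath d R q.2))
      (angleMeasure.prod angleMeasure) :=
    (continuous_comp_anglePath hR.le hR.le (hcont.mono hRU)).integrable_of_hasCompactSupport
      (.of_compactSpace _)
  refine (analyticAt_integral_continuousMap_smul hintegrable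
    (analyticAt_cauchyKernel_mul (mem_of_mem_nhds hball))).congr ?_
  filter_upwards [hball] with p hpR
  refine integral_cauchyKernel_mul_smul (hcont.mono hRU) (fun w hw => ?_) (fun s hs => ?_)
    hpR.1 hpR.2
  · exact DifferentiableOn.diffContOnCl_ball (U := closedBall _ R) (fun s hs =>
      (hfst (s, w) (hRU ⟨hs, hw⟩)).differentiableWithinAt) subset_rfl
  · exact DifferentiableOn.diffContOnCl_ball (U := closedBall _ R) (fun w hw =>
      (hsnd (s, w) (hRU ⟨hs, hw⟩)).differentiableWithinAt) subset_rfl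

section Power

variable [CompleteSpace E] {n : ℕ} [NeZero n]

theorem differentiable_of_comp_pow {g : ℂ → E}
    (hg : Differentiable ℂ fun z => g (z ^ n)) : Differentiable ℂ g := by
  have hcont : Continuous g := (Complex.isOpenQuotientMap_pow n).continuous_comp_iff.1 hg.continuous
  have hoff : DifferentiableOn ℂ g (univ \ {0}) := by
    rintro μ ⟨-, hμ : μ ≠ 0⟩
    obtain ⟨z, rfl⟩ := (Complex.isOpenQuotientMap_pow n).surjective μ
    have hz : z ≠ 0 := ne_zero_pow (NeZero.ne n) hμ
    have hderiv : deriv (fun w : ℂ => w ^ n) z ≠ 0 := by simp [NeZero.ne n, hz]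
    exact ((analyticAt_comp_iff_of_deriv_ne_zero (by fun_prop) hderiv).1
      (hg.analyticAt z)).differentiableAt.differentiableWithinAt
  exact differentiableOn_univ.1 <|
    (Complex.differentiableOn_compl_singleton_and_continuousAt_iff univ_mem).1
      ⟨hoff, hcont.continuousAt⟩

theorem exists_analyticOnNhd_comp_pow {F : ℂ × ℂ → E} (hF : AnalyticOnNhd ℂ F univ)
    (hfib : ∀ t z w : ℂ, z ^ n = w ^ n → F (t, z) = F (t, w)) :
    ∃ Φ : ℂ × ℂ → E, AnalyticOnNhd ℂ Φ univ ∧ ∀ t z : ℂ, F (t, z) = Φ (t, z ^ n) := by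
  have hq : IsOpenQuotientMap (Prod.map id (· ^ n) : ℂ × ℂ → ℂ × ℂ) :=
    IsOpenQuotientMap.id.prodMap (Complex.isOpenQuotientMap_pow n)
  choose root hroot using (Complex.isOpenQuotientMap_pow n).surjective
  let Φ : ℂ × ℂ → E := fun p => F (p.1, root p.2)
  have hΦ (t z : ℂ) : F (t, z) = Φ (t, z ^ n) := hfib t z _ (hroot _).symm
  have hdiff : Differentiable ℂ F := fun p => (hF p trivial).differentiableAt
  refine ⟨Φ, analyticOnNhd_of_continuousOn_of_differentiableAt_slices isOpen_univ ?_ ?_ ?_, hΦ⟩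
  · refine (hq.continuous_comp_iff.1 ?_).continuousOn
    exact hdiff.continuous.congr fun p => hΦ p.1 p.2
  · rintro ⟨t, μ⟩ -
    exact hdiff.comp (by fun_prop : Differentiable ℂ fun s => (s, root μ)) t
  · rintro ⟨t, μ⟩ -
    refine differentiable_of_comp_pow (n := n) ?_ μ
    simp only [← hΦ]
    fun_prop

end Power

theorem iteratedDeriv_two_comp_sq {𝕜 F : Type*} [NontriviallyNormedField 𝕜] [NormedAddCommGroup F]
    [NormedSpace 𝕜 F] {φ : 𝕜 → F} (hφ : ContDiff 𝕜 2 φ) (z : 𝕜) :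
    iteratedDeriv 2 (fun w => φ (w ^ 2)) z =
      (4 * z ^ 2) • iteratedDeriv 2 φ (z ^ 2) + (2 : 𝕜) • deriv φ (z ^ 2) := by
  have hsq (w : 𝕜) : HasDerivAt (· ^ 2) (2 * w) w := by simpa using hasDerivAt_pow 2 w
  have hd : deriv (fun w => φ (w ^ 2)) = fun w => (2 * w) • deriv φ (w ^ 2) := by
    funext w
    exact ((hφ.differentiable two_ne_zero).differentiableAt.hasDerivAt.scomp w (hsq w)).deriv
  have hd2 : HasDerivAt (fun w => deriv φ (w ^ 2)) ((2 * z) • deriv (deriv φ) (z ^ 2)) z :=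
    ((hφ.differentiable_deriv_two).differentiableAt.hasDerivAt).scomp z (hsq z)
  have hlin : HasDerivAt (fun w : 𝕜 => 2 * w) 2 z := by simpa using (hasDerivAt_id z).const_mul 2
  simp only [iteratedDeriv_succ, iteratedDeriv_zero, hd]
  rw [(hlin.fun_smul hd2).deriv, smul_smul]
  ring_nf

/-- If `F` is entire caloric and even in its second variable, then
`F(t,z) = Φ(t, z²)` for some `Φ` analytic on all of `ℂ²` satisfying the degenerate
heat-type equation `∂_t Φ(t,μ) = 4μ ∂_μ² Φ(t,μ) + 2 ∂_μ Φ(t,μ)`. -/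
theorem even_caloric_factors_through_square
    (F : ℂ × ℂ → ℂ) (hF : IsEntireCaloric F)
    (heven : ∀ t z : ℂ, F (t, -z) = F (t, z)) :
    ∃ Φ : ℂ × ℂ → ℂ, AnalyticOnNhd ℂ Φ Set.univ ∧
      (∀ t z : ℂ, F (t, z) = Φ (t, z ^ 2)) ∧
      ∀ t μ : ℂ,
        deriv (fun s => Φ (s, μ)) t =
          4 * μ * iteratedDeriv 2 (fun w => Φ (t, w)) μ + 2 * deriv (fun w => Φ (t, w)) μ := by
  obtain ⟨Φ, hΦ, hFΦ⟩ := exists_analyticOnNhd_comp_pow (n := 2) hF.1 fun t z w hzw => by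
    rcases sq_eq_sq_iff_eq_or_eq_neg.1 hzw with rfl | rfl
    · rfl
    · exact heven t w
  refine ⟨Φ, hΦ, hFΦ, fun t μ => ?_⟩
  obtain ⟨z, rfl⟩ := IsAlgClosed.exists_pow_nat_eq μ two_pos
  have hslice : ContDiff ℂ 2 fun w => Φ (t, w) :=
    hΦ.contDiff.comp (contDiff_prodMk_right t)
  calc deriv (fun s => Φ (s, z ^ 2)) t
      = iteratedDeriv 2 (fun w => Φ (t, w ^ 2)) z := by simpa only [hFΦ] using hF.2 t z
    _ = _ := iteratedDeriv_two_comp_sq hslice z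
end
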